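/- arXiv:math/0507156 — 3 statements merged into one kernel-verified Lean document; each statement's English description precedes it below -/
import Mathlib

section
/- Let (a_α)_{α ∈ 𝔽ₙ⁺} be complex numbers with a_{g₀} real, a_{g₀} ≥ 0, such that for every r ∈ [0,1) the series ∑_{k=0}^∞ r^k (∑_{|α|=k} |a_α|²)^{1/2} converges. Assume that for every r ∈ [0,1) the operator f(rS) := ∑_{k=0}^∞ ∑_{|α|=k} r^k a_α S_α (which converges in operator norm) satisfies Re f(rS) ≤ I. Then: (i) (∑_{|α|=k} |a_α|²)^{1/2} ≤ 2(1 − a_{g₀}) for every k ≥ 1; (ii) for every complex Hilbert space 𝒦 and every (T₁,…,Tₙ) ∈ [B(𝒦)ⁿ]_{1/3}, ∑_{k=0}^∞ ‖∑_{|α|=k} |a_α| T_α‖ ≤ 1; in particular, ∑_{α ∈ 𝔽ₙ⁺} |a_α| r_α ≤ 1 for every tuple r of nonnegative reals with ‖r‖₂ ≤ 1/3. -/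
open scoped BigOperators

/-- The full Fock space, identified with `ℓ²(𝔽ₙ⁺)` where the free monoid `𝔽ₙ⁺` on `n`
generators is identified with `List (Fin n)`. -/
noncomputable abbrev Fock (n : ℕ) : Type := lp (fun _ : List (Fin n) => ℂ) 2

/-- The orthonormal basis vector `e_α` of the Fock space. -/
noncomputable def fockBasis (n : ℕ) (α : List (Fin n)) : Fock n := lp.single 2 α 1

/-- For a word `α = g_{i₁} ⋯ g_{i_k}`, the product `T_α = T_{i₁} ⋯ T_{i_k}` (and `T_{g₀} = 1`). -/
noncomputable def wordProd {n : ℕ} {M : Type*} [Monoid M] (T : Fin n → M)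
    (α : List (Fin n)) : M :=
  (α.map T).prod

/-- `fm m t = ∑_{k=1}^{m-1} t^k * cos (π / (⌊(m-1)/k⌋ + 2))`. -/
noncomputable def fm (m : ℕ) (t : ℝ) : ℝ :=
  ∑ k ∈ Finset.Icc 1 (m - 1), t ^ k * Real.cos (Real.pi / (((m - 1) / k + 2 : ℕ) : ℝ))

/-!
Write `F_k` for the degree `k` part of `f(S)` and `e` for the vacuum vector `e_{g₀}`. The operator
`P = I - Re f(rS)` is positive, and its compression to the span of `e` and `F_k e` sees only the
coefficients of degree `0` and `k`, because the `F_j` shift the grading of the Fock space by `j`.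
Cauchy–Schwarz for the form `⟪·, P ·⟫` at these two vectors is the inequality (i) for the
coefficients `r^k a_α`, and `r → 1`. The remaining parts follow from (i) by Cauchy–Schwarz over the
words of length `k`, where the row contraction contributes the factor `3⁻ᵏ`: the series is bounded
by `a_{g₀} + ∑_{k ≥ 1} 2 (1 - a_{g₀}) 3⁻ᵏ = 1`. Scalars `r_i` are the tuples in the C⋆-algebra `ℂ`.
-/

section Words

theorem sum_ofFn_succ {ι M : Type*} [Fintype ι] [AddCommMonoid M] (k : ℕ) (g : List ι → M) :
    ∑ w : Fin (k + 1) → ι, g (List.ofFn w) =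
      ∑ i, ∑ w : Fin k → ι, g (i :: List.ofFn w) := by
  rw [← (Fin.consEquiv fun _ : Fin (k + 1) => ι).sum_comp, Fintype.sum_prod_type]
  simp [Fin.consEquiv, List.ofFn_succ]

theorem hasSum_list_of_nonneg {ι : Type*} [Fintype ι] {f : List ι → ℝ} {s : ℝ} (hf : ∀ l, 0 ≤ f l)
    (hs : HasSum (fun k : ℕ => ∑ w : Fin k → ι, f (List.ofFn w)) s) : HasSum f s := by
  have hsummable : Summable fun p : Σ k, Fin k → ι => f (List.ofFn p.2) := by
    refine (summable_sigma_of_nonneg fun p => hf _).2 ⟨fun k => Summable.of_finite, ?_⟩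
    simpa only [tsum_fintype] using hs.summable
  have hsum : HasSum (fun p : Σ k, Fin k → ι => f (List.ofFn p.2)) s := by
    rw [hsummable.hasSum_iff, hsummable.tsum_sigma]
    simpa only [tsum_fintype] using hs.tsum_eq
  exact (List.equivSigmaTuple (α := ι)).symm.hasSum_iff.1 hsum

variable {n : ℕ} {M : Type*}

@[simp]
theorem wordProd_nil [Monoid M] (T : Fin n → M) : wordProd T [] = 1 := rfl

@[simp]
theorem wordProd_cons [Monoid M] (T : Fin n → M) (i : Fin n) (α : List (Fin n)) :
    wordProd T (i :: α) = T i * wordProd T α := by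
  simp [wordProd]

theorem wordProd_nonneg {r : Fin n → ℝ} (hr : ∀ i, 0 ≤ r i) (α : List (Fin n)) :
    0 ≤ wordProd r α :=
  List.prod_nonneg (by simpa using fun i _ => hr i)

theorem map_wordProd {N F : Type*} [Monoid M] [Monoid N] [FunLike F M N] [MonoidHomClass F M N]
    (φ : F) (T : Fin n → M) (α : List (Fin n)) :
    φ (wordProd T α) = wordProd (fun i => φ (T i)) α := by
  simp [wordProd, map_list_prod, Function.comp_def]

/-- The homogeneous part `∑_{|α| = k} a_α T_α` of degree `k` of the formal power series with
coefficients `a`, evaluated at the tuple `T`. -/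
noncomputable def homogPart [Semiring M] [Module ℂ M] (a : List (Fin n) → ℂ) (T : Fin n → M)
    (k : ℕ) : M :=
  ∑ w : Fin k → Fin n, a (List.ofFn w) • wordProd T (List.ofFn w)

@[simp]
theorem homogPart_zero [Semiring M] [Module ℂ M] (a : List (Fin n) → ℂ) (T : Fin n → M) :
    homogPart a T 0 = a [] • 1 := by
  simp [homogPart]

/-- The `ℓ²` norm `(∑_{|α| = k} |a_α|²)^{1/2}` of the coefficients of degree `k`. -/
noncomputable def coeffNorm (a : List (Fin n) → ℂ) (k : ℕ) : ℝ :=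
  √(∑ w : Fin k → Fin n, ‖a (List.ofFn w)‖ ^ 2)

@[simp]
theorem coeffNorm_zero (a : List (Fin n) → ℂ) : coeffNorm a 0 = ‖a []‖ := by
  simp [coeffNorm]

theorem coeffNorm_nonneg (a : List (Fin n) → ℂ) (k : ℕ) : 0 ≤ coeffNorm a k :=
  Real.sqrt_nonneg _

theorem coeffNorm_ofReal_norm (a : List (Fin n) → ℂ) (k : ℕ) :
    coeffNorm (fun α => (‖a α‖ : ℂ)) k = coeffNorm a k := by
  simp [coeffNorm]

theorem coeffNorm_dilation {r : ℝ} (hr : 0 ≤ r) (a : List (Fin n) → ℂ) (k : ℕ) :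
    coeffNorm (fun α => (r : ℂ) ^ α.length * a α) k = r ^ k * coeffNorm a k := by
  simp only [coeffNorm, List.length_ofFn, norm_mul, norm_pow, Complex.norm_of_nonneg hr, mul_pow,
    ← Finset.mul_sum]
  rw [Real.sqrt_mul (by positivity), Real.sqrt_sq (pow_nonneg hr k)]

end Words

section CStarAlgebra

theorem cstar_norm_one_le_one {A : Type*} [CStarAlgebra A] : ‖(1 : A)‖ ≤ 1 := by
  rcases subsingleton_or_nontrivial A with _ | _
  · simp [norm_of_subsingleton]
  · exact CStarRing.norm_one.le

variable {A : Type*} [CStarAlgebra A] [PartialOrder A] [StarOrderedRing A]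

open scoped InnerProductSpace WithCStarModule in
open WithCStarModule in
theorem norm_sum_smul_le_sqrt_mul_sqrt {ι : Type*} [Fintype ι] (c : ι → ℂ) (x : ι → A) :
    ‖∑ i, c i • x i‖ ≤ √(∑ i, ‖c i‖ ^ 2) * √‖∑ i, x i * star (x i)‖ := by
  let u : C⋆ᵐᵒᵈ(A, ι → A) := (equiv A _).symm fun i => star (c i) • 1
  let v : C⋆ᵐᵒᵈ(A, ι → A) := (equiv A _).symm x
  have huv : inner A u v = ∑ i, c i • x i := by
    rw [pi_inner]
    simp [u, v, WithCStarModule.inner_def]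
  have hu : ‖u‖ ≤ √(∑ i, ‖c i‖ ^ 2) := by
    have hsum : ∑ i, inner A (u i) (u i) = ((∑ i, ‖c i‖ ^ 2 : ℝ) : ℂ) • (1 : A) := by
      simp [u, WithCStarModule.inner_def, Finset.sum_smul, smul_smul, Complex.mul_conj']
    rw [pi_norm, hsum]
    refine Real.sqrt_le_sqrt ((norm_smul_le _ _).trans ?_)
    rw [Complex.norm_of_nonneg (by positivity)]
    exact mul_le_of_le_one_right (by positivity) cstar_norm_one_le_one
  calc ‖∑ i, c i • x i‖ = ‖inner A u v‖ := by rw [huv]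
    _ ≤ ‖u‖ * ‖v‖ := CStarModule.norm_inner_le _
    _ ≤ √(∑ i, ‖c i‖ ^ 2) * √‖∑ i, x i * star (x i)‖ :=
      mul_le_mul_of_nonneg_right hu (CStarModule.norm_nonneg A)

theorem norm_sum_conjugate_le {ι : Type*} [Fintype ι] (x : ι → A) {b : A} (hb : 0 ≤ b) :
    ‖∑ i, x i * b * star (x i)‖ ≤ ‖b‖ * ‖∑ i, x i * star (x i)‖ := by
  have hle : ∑ i, x i * b * star (x i) ≤ ‖b‖ • ∑ i, x i * star (x i) := by
    rw [Finset.smul_sum]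
    exact Finset.sum_le_sum fun i _ =>
      CStarAlgebra.star_right_conjugate_le_norm_smul hb.isSelfAdjoint
  have hnonneg : 0 ≤ ∑ i, x i * b * star (x i) :=
    Finset.sum_nonneg fun i _ => star_right_conjugate_nonneg hb (x i)
  simpa [norm_smul] using CStarAlgebra.norm_le_norm_of_nonneg_of_le hnonneg hle

variable {n : ℕ}

theorem norm_sum_wordProd_mul_star_le (T : Fin n → A) (k : ℕ) :
    ‖∑ w : Fin k → Fin n, wordProd T (List.ofFn w) * star (wordProd T (List.ofFn w))‖ ≤
      ‖∑ i, T i * star (T i)‖ ^ k := by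
  induction k with
  | zero => simpa using cstar_norm_one_le_one
  | succ k ih =>
    have hfactor : ∑ w : Fin (k + 1) → Fin n,
          wordProd T (List.ofFn w) * star (wordProd T (List.ofFn w)) =
        ∑ i, T i * (∑ w : Fin k → Fin n,
          wordProd T (List.ofFn w) * star (wordProd T (List.ofFn w))) * star (T i) := by
      rw [sum_ofFn_succ k fun α => wordProd T α * star (wordProd T α)]
      simp [Finset.mul_sum, Finset.sum_mul, mul_assoc]
    rw [hfactor, pow_succ]
    refine (norm_sum_conjugate_le T (Finset.sum_nonneg fun w _ => mul_star_self_nonneg _)).trans ?_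
    gcongr

theorem norm_homogPart_le (a : List (Fin n) → ℂ) (T : Fin n → A) (k : ℕ) :
    ‖homogPart a T k‖ ≤ coeffNorm a k * √‖∑ i, T i * star (T i)‖ ^ k := by
  refine (norm_sum_smul_le_sqrt_mul_sqrt _ _).trans ?_
  refine mul_le_mul_of_nonneg_left ?_ (coeffNorm_nonneg a k)
  refine Real.sqrt_le_iff.2 ⟨by positivity, ?_⟩
  rw [← pow_mul, mul_comm, pow_mul, Real.sq_sqrt (norm_nonneg _)]
  exact norm_sum_wordProd_mul_star_le T k

end CStarAlgebra

section Bohr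

theorem summable_and_tsum_le_one_of_le_geometric {c : ℝ} {B : ℕ → ℝ} (hB : ∀ k, 0 ≤ B k)
    (hzero : B 0 ≤ c) (hpos : ∀ k, 1 ≤ k → B k ≤ 2 * (1 - c) * (1 / 3) ^ k) :
    Summable B ∧ ∑' k, B k ≤ 1 := by
  have hgeom : HasSum (fun k : ℕ => 2 * (1 - c) * (1 / 3) ^ (k + 1)) (1 - c) := by
    convert! (hasSum_geometric_of_lt_one (r := (1 / 3 : ℝ)) (by norm_num) (by norm_num)).mul_left
      (2 * (1 - c) * (1 / 3)) using 1
    · ext k; ring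
    · ring
  have hle : ∀ k, B (k + 1) ≤ 2 * (1 - c) * (1 / 3) ^ (k + 1) := fun k => hpos _ k.succ_pos
  have htail : Summable fun k => B (k + 1) :=
    .of_nonneg_of_le (fun _ => hB _) hle hgeom.summable
  have hsum : Summable B := (summable_nat_add_iff 1).1 htail
  refine ⟨hsum, ?_⟩
  calc ∑' k, B k = B 0 + ∑' k, B (k + 1) := hsum.tsum_eq_zero_add
    _ ≤ c + (1 - c) := add_le_add hzero (hasSum_le hle htail.hasSum hgeom)
    _ = 1 := by ring

variable {n : ℕ} {a : List (Fin n) → ℂ}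

theorem summable_norm_homogPart_and_tsum_le_one {A : Type*} [CStarAlgebra A] [PartialOrder A]
    [StarOrderedRing A] (ha : ∀ k, 1 ≤ k → coeffNorm a k ≤ 2 * (1 - ‖a []‖)) (T : Fin n → A)
    (hT : √‖∑ i, T i * star (T i)‖ ≤ 1 / 3) :
    Summable (fun k => ‖homogPart (fun α => (‖a α‖ : ℂ)) T k‖) ∧
      ∑' k, ‖homogPart (fun α => (‖a α‖ : ℂ)) T k‖ ≤ 1 := by
  have hle (k : ℕ) : ‖homogPart (fun α => (‖a α‖ : ℂ)) T k‖ ≤ coeffNorm a k * (1 / 3) ^ k := by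
    have hc := coeffNorm_nonneg a k
    grw [norm_homogPart_le, coeffNorm_ofReal_norm, hT]
  refine summable_and_tsum_le_one_of_le_geometric (fun k => norm_nonneg _) (c := ‖a []‖)
    (by simpa using hle 0) fun k hk => (hle k).trans ?_
  gcongr
  exact ha k hk

open scoped ComplexOrder in
theorem summable_norm_mul_wordProd_and_tsum_le_one
    (ha : ∀ k, 1 ≤ k → coeffNorm a k ≤ 2 * (1 - ‖a []‖)) {r : Fin n → ℝ} (hr : ∀ i, 0 ≤ r i)
    (hr_norm : √(∑ i, r i ^ 2) ≤ 1 / 3) :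
    Summable (fun α => ‖a α‖ * wordProd r α) ∧ ∑' α, ‖a α‖ * wordProd r α ≤ 1 := by
  have hnonneg (α : List (Fin n)) : 0 ≤ ‖a α‖ * wordProd r α :=
    mul_nonneg (norm_nonneg _) (wordProd_nonneg hr α)
  have hrow : ‖∑ i, (r i : ℂ) * star (r i : ℂ)‖ = ∑ i, r i ^ 2 := by
    have : ∑ i, (r i : ℂ) * star (r i : ℂ) = ((∑ i, r i ^ 2 : ℝ) : ℂ) := by simp [sq]
    rw [this, Complex.norm_of_nonneg (Finset.sum_nonneg fun i _ => sq_nonneg _)]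
  have hlevel (k : ℕ) : ‖homogPart (fun α => (‖a α‖ : ℂ)) (fun i => (r i : ℂ)) k‖ =
      ∑ w : Fin k → Fin n, ‖a (List.ofFn w)‖ * wordProd r (List.ofFn w) := by
    have : homogPart (fun α => (‖a α‖ : ℂ)) (fun i => (r i : ℂ)) k =
        ((∑ w : Fin k → Fin n, ‖a (List.ofFn w)‖ * wordProd r (List.ofFn w) : ℝ) : ℂ) := by
      simp [homogPart, ← Complex.ofRealHom_eq_coe, map_wordProd]
    rw [this, Complex.norm_of_nonneg (Finset.sum_nonneg fun w _ => hnonneg _)]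
  obtain ⟨hsum, hle⟩ := summable_norm_homogPart_and_tsum_le_one ha (fun i => (r i : ℂ))
    (by rwa [hrow])
  simp only [hlevel] at hsum hle
  have hlist := hasSum_list_of_nonneg hnonneg hsum.hasSum
  exact ⟨hlist.summable, hlist.tsum_eq.trans_le hle⟩

end Bohr

section RealPart

theorem norm_inner_sq_le_of_isPositive {𝕜 E : Type*} [RCLike 𝕜] [NormedAddCommGroup E]
    [InnerProductSpace 𝕜 E] {P : E →ₗ[𝕜] E} (hP : P.IsPositive) (x y : E) :
    ‖inner 𝕜 y (P x)‖ ^ 2 ≤ RCLike.re (inner 𝕜 x (P x)) * RCLike.re (inner 𝕜 y (P y)) := by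
  let core : PreInnerProductSpace.Core 𝕜 E :=
    { inner := fun u v => inner 𝕜 u (P v)
      conj_inner_symm := fun u v => by rw [inner_conj_symm, hP.isSymmetric]
      re_inner_nonneg := hP.re_inner_nonneg_right
      add_left := fun u v w => inner_add_left u v (P w)
      smul_left := fun u v c => inner_smul_left u (P v) c }
  have h := @InnerProductSpace.Core.inner_mul_inner_self_le 𝕜 E _ _ _ core x y
  have hsymm : ‖inner 𝕜 x (P y)‖ = ‖inner 𝕜 y (P x)‖ := by
    rw [← norm_inner_symm, hP.isSymmetric]
  change ‖inner 𝕜 x (P y)‖ * ‖inner 𝕜 y (P x)‖ ≤ _ at h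
  rwa [hsymm, ← sq] at h

variable {H : Type*} [NormedAddCommGroup H] [InnerProductSpace ℂ H] [CompleteSpace H]
  {G : H →L[ℂ] H}

theorem inner_one_sub_re_apply (x y : H) :
    inner ℂ y ((1 - (2 : ℂ)⁻¹ • (G + ContinuousLinearMap.adjoint G)) x) =
      inner ℂ y x - (inner ℂ y (G x) + inner ℂ (G y) x) / 2 := by
  simp only [sub_apply, one_apply_eq_self, smul_apply, add_apply, inner_sub_right,
    inner_smul_right, inner_add_right, ContinuousLinearMap.adjoint_inner_right]
  ring

theorem re_inner_one_sub_re_apply_self (x : H) :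
    (inner ℂ x ((1 - (2 : ℂ)⁻¹ • (G + ContinuousLinearMap.adjoint G)) x)).re =
      ‖x‖ ^ 2 - (inner ℂ x (G x)).re := by
  rw [inner_one_sub_re_apply, ← inner_conj_symm (G x) x, Complex.add_conj,
    inner_self_eq_norm_sq_to_K]
  simp [← Complex.ofReal_pow]

theorem re_inner_apply_le_norm_sq
    (hG : (2 : ℂ)⁻¹ • (G + ContinuousLinearMap.adjoint G) ≤ 1) (x : H) :
    (inner ℂ x (G x)).re ≤ ‖x‖ ^ 2 := by
  have h := ((ContinuousLinearMap.le_def _ _).1 hG).re_inner_nonneg_right x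
  rw [RCLike.re_to_complex, re_inner_one_sub_re_apply_self] at h
  linarith

theorem norm_inner_apply_sq_le
    (hG : (2 : ℂ)⁻¹ • (G + ContinuousLinearMap.adjoint G) ≤ 1) {x y : H}
    (hyx : inner ℂ y x = 0) (hGyx : inner ℂ (G y) x = 0) :
    ‖inner ℂ y (G x)‖ ^ 2 ≤
      4 * ((‖x‖ ^ 2 - (inner ℂ x (G x)).re) * (‖y‖ ^ 2 - (inner ℂ y (G y)).re)) := by
  have h := norm_inner_sq_le_of_isPositive
    ((ContinuousLinearMap.le_def _ _).1 hG).toLinearMap x y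
  simp only [ContinuousLinearMap.coe_coe, RCLike.re_to_complex,
    re_inner_one_sub_re_apply_self] at h
  rw [inner_one_sub_re_apply, hyx, hGyx] at h
  have hsq : ‖(0 : ℂ) - (inner ℂ y (G x) + 0) / 2‖ ^ 2 = ‖inner ℂ y (G x)‖ ^ 2 / 4 := by
    rw [zero_sub, norm_neg, add_zero, norm_div, div_pow, Complex.norm_ofNat]
    norm_num
  rw [hsq] at h
  linarith

omit [CompleteSpace H] in
theorem hasSum_inner_apply {ι : Type*} {F : ι → H →L[ℂ] H} (hF : HasSum F G) (x y : H) :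
    HasSum (fun j => inner ℂ y (F j x)) (inner ℂ y (G x)) :=
  (hF.mapL (ContinuousLinearMap.apply ℂ H x)).mapL (innerSL ℂ y)

end RealPart

section Fock

variable {n : ℕ}

theorem orthonormal_fockBasis (n : ℕ) : Orthonormal ℂ (fockBasis n) := by
  rw [orthonormal_iff_ite]
  intro α β
  simp [fockBasis, lp.inner_single_left, lp.single_apply, Pi.single_apply]

/-- The homogeneous vectors of degree `m` in the Fock space: the span of the `e_α` with
`|α| = m`. -/
noncomputable def homogVectors (n m : ℕ) : Submodule ℂ (Fock n) :=
  Submodule.span ℂ (fockBasis n '' {α | α.length = m})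

theorem fockBasis_mem_homogVectors (α : List (Fin n)) : fockBasis n α ∈ homogVectors n α.length :=
  Submodule.subset_span ⟨α, rfl, rfl⟩

theorem isOrtho_homogVectors {l m : ℕ} (h : l ≠ m) :
    (homogVectors n l).IsOrtho (homogVectors n m) := by
  refine Submodule.isOrtho_span.2 ?_
  rintro _ ⟨α, rfl, rfl⟩ _ ⟨β, rfl, rfl⟩
  exact (orthonormal_fockBasis n).inner_eq_zero fun hαβ => h (congrArg List.length hαβ)

variable {S : Fin n → Fock n →L[ℂ] Fock n}
  (hS : ∀ (i : Fin n) (α : List (Fin n)), S i (fockBasis n α) = fockBasis n (i :: α))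
include hS

theorem wordProd_apply_fockBasis (α β : List (Fin n)) :
    wordProd S α (fockBasis n β) = fockBasis n (α ++ β) := by
  induction α with
  | nil => simp
  | cons i α ih => simp [ih, hS]

theorem homogPart_apply_fockBasis (a : List (Fin n) → ℂ) (k : ℕ) (β : List (Fin n)) :
    homogPart a S k (fockBasis n β) =
      ∑ w : Fin k → Fin n, a (List.ofFn w) • fockBasis n (List.ofFn w ++ β) := by
  simp [homogPart, wordProd_apply_fockBasis hS]

theorem homogPart_apply_mem_homogVectors (a : List (Fin n) → ℂ) (k : ℕ) {m : ℕ} {x : Fock n}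
    (hx : x ∈ homogVectors n m) : homogPart a S k x ∈ homogVectors n (k + m) := by
  suffices homogVectors n m ≤
      (homogVectors n (k + m)).comap (homogPart a S k).toLinearMap from this hx
  refine Submodule.span_le.2 ?_
  rintro _ ⟨β, rfl, rfl⟩
  change homogPart a S k (fockBasis n β) ∈ homogVectors n (k + β.length)
  rw [homogPart_apply_fockBasis hS]
  refine Submodule.sum_mem _ fun w _ => Submodule.smul_mem _ _ ?_
  simpa using fockBasis_mem_homogVectors (List.ofFn w ++ β)

theorem norm_homogPart_apply_vacuum (a : List (Fin n) → ℂ) (k : ℕ) :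
    ‖homogPart a S k (fockBasis n [])‖ = coeffNorm a k := by
  have horth : Orthonormal ℂ fun w : Fin k → Fin n => fockBasis n (List.ofFn w) :=
    (orthonormal_fockBasis n).comp _ List.ofFn_injective
  rw [norm_eq_sqrt_re_inner (𝕜 := ℂ), homogPart_apply_fockBasis hS]
  simp only [List.append_nil, horth.inner_sum, Complex.conj_mul', coeffNorm]
  norm_cast

variable {a : List (Fin n) → ℂ} {G : Fock n →L[ℂ] Fock n} (hG : HasSum (homogPart a S) G)
include hG

theorem inner_apply_eq_inner_homogPart_apply {k m : ℕ} {x y : Fock n}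
    (hx : x ∈ homogVectors n m) (hy : y ∈ homogVectors n (k + m)) :
    inner ℂ y (G x) = inner ℂ y (homogPart a S k x) := by
  refine (hasSum_inner_apply hG x y).unique (hasSum_single k fun j hj => ?_)
  exact (isOrtho_homogVectors (by omega)).inner_eq hy
    (homogPart_apply_mem_homogVectors hS a j hx)

theorem inner_apply_eq_zero_of_lt {l m : ℕ} (hlm : l < m) {x y : Fock n}
    (hx : x ∈ homogVectors n m) (hy : y ∈ homogVectors n l) : inner ℂ y (G x) = 0 := by
  have hzero (j : ℕ) : inner ℂ y (homogPart a S j x) = 0 :=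
    (isOrtho_homogVectors (by omega)).inner_eq hy (homogPart_apply_mem_homogVectors hS a j hx)
  have hsum := hasSum_inner_apply hG x y
  simp only [hzero] at hsum
  exact hsum.unique hasSum_zero

theorem re_inner_apply_self_of_mem_homogVectors {m : ℕ} {x : Fock n} (hx : x ∈ homogVectors n m) :
    (inner ℂ x (G x)).re = (a []).re * ‖x‖ ^ 2 := by
  rw [inner_apply_eq_inner_homogPart_apply hS hG (k := 0) hx (by simpa using hx), homogPart_zero,
    smul_apply, one_apply_eq_self, inner_smul_right, inner_self_eq_norm_sq_to_K]
  simp [← Complex.ofReal_pow]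

theorem coeffNorm_le_two_mul_one_sub_re
    (hre : (2 : ℂ)⁻¹ • (G + ContinuousLinearMap.adjoint G) ≤ 1) {k : ℕ} (hk : 1 ≤ k) :
    coeffNorm a k ≤ 2 * (1 - (a []).re) := by
  set e := fockBasis n []
  set y := homogPart a S k e with hy_def
  have he : e ∈ homogVectors n 0 := fockBasis_mem_homogVectors []
  have hy : y ∈ homogVectors n (k + 0) := homogPart_apply_mem_homogVectors hS a k he
  have he_norm : ‖e‖ = 1 := (orthonormal_fockBasis n).norm_eq_one []
  have hy_norm : ‖y‖ = coeffNorm a k := norm_homogPart_apply_vacuum hS a k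
  have hye : inner ℂ y e = 0 := (isOrtho_homogVectors (by omega)).inner_eq hy he
  have hGye : inner ℂ (G y) e = 0 :=
    inner_eq_zero_symm.1 (inner_apply_eq_zero_of_lt hS hG (by omega) hy he)
  have hyGe : ‖inner ℂ y (G e)‖ = ‖y‖ ^ 2 := by
    rw [inner_apply_eq_inner_homogPart_apply hS hG (k := k) he hy, ← hy_def,
      inner_self_eq_norm_sq_to_K]
    simp
  have hre_le : (a []).re ≤ 1 := by
    have h := re_inner_apply_le_norm_sq hre e
    rwa [re_inner_apply_self_of_mem_homogVectors hS hG he, he_norm, one_pow, mul_one] at h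
  have hcs := norm_inner_apply_sq_le hre hye hGye
  rw [hyGe, re_inner_apply_self_of_mem_homogVectors hS hG he,
    re_inner_apply_self_of_mem_homogVectors hS hG hy, he_norm, hy_norm] at hcs
  rcases (coeffNorm_nonneg a k).eq_or_lt with hzero | hpos
  · rw [← hzero]
    linarith
  · refine (sq_le_sq₀ hpos.le (by linarith)).1 (le_of_mul_le_mul_right ?_ (pow_pos hpos 2))
    linarith

end Fock

theorem le_of_forall_pow_mul_le {c C : ℝ} {k : ℕ} (h : ∀ r : ℝ, 0 ≤ r → r < 1 → r ^ k * c ≤ C) :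
    c ≤ C := by
  have hlim : Filter.Tendsto (fun r : ℝ => r ^ k * c) (nhdsWithin 1 (Set.Iio 1)) (nhds c) := by
    have hcont : Continuous fun r : ℝ => r ^ k * c := by fun_prop
    simpa using (hcont.tendsto 1).mono_left nhdsWithin_le_nhds
  refine le_of_tendsto hlim ?_
  filter_upwards [Ioo_mem_nhdsLT zero_lt_one] with r hr using h r hr.1.le hr.2

theorem stmt_10 (n : ℕ) (hn : 1 ≤ n)
    (a : List (Fin n) → ℂ) (ha_im : (a []).im = 0) (ha_nonneg : 0 ≤ (a []).re)
    (hconv : ∀ r : ℝ, 0 ≤ r → r < 1 →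
      Summable (fun k : ℕ =>
        r ^ k * Real.sqrt (∑ w : Fin k → Fin n, ‖a (List.ofFn w)‖ ^ 2)))
    (S : Fin n → Fock n →L[ℂ] Fock n)
    (hS : ∀ (i : Fin n) (α : List (Fin n)), S i (fockBasis n α) = fockBasis n (i :: α))
    (hopsum : ∀ r : ℝ, 0 ≤ r → r < 1 →
      Summable (fun k : ℕ => ∑ w : Fin k → Fin n,
        ((r : ℂ) ^ k * a (List.ofFn w)) • wordProd S (List.ofFn w)))
    (hre : ∀ r : ℝ, 0 ≤ r → r < 1 →
      (2 : ℂ)⁻¹ • ((∑' k : ℕ, ∑ w : Fin k → Fin n,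
          ((r : ℂ) ^ k * a (List.ofFn w)) • wordProd S (List.ofFn w)) +
        ContinuousLinearMap.adjoint (∑' k : ℕ, ∑ w : Fin k → Fin n,
          ((r : ℂ) ^ k * a (List.ofFn w)) • wordProd S (List.ofFn w))) ≤ 1) :
    (∀ k : ℕ, 1 ≤ k →
      Real.sqrt (∑ w : Fin k → Fin n, ‖a (List.ofFn w)‖ ^ 2) ≤
        2 * (1 - (a []).re)) ∧
    (∀ (K : Type) [NormedAddCommGroup K] [InnerProductSpace ℂ K] [CompleteSpace K],
      ∀ T : Fin n → K →L[ℂ] K,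
        Real.sqrt ‖∑ i, T i * ContinuousLinearMap.adjoint (T i)‖ ≤ 1 / 3 →
        Summable (fun k : ℕ => ‖∑ w : Fin k → Fin n,
          ((‖a (List.ofFn w)‖ : ℂ)) • wordProd T (List.ofFn w)‖) ∧
        ∑' k : ℕ, ‖∑ w : Fin k → Fin n,
          ((‖a (List.ofFn w)‖ : ℂ)) • wordProd T (List.ofFn w)‖ ≤ 1) ∧
    (∀ r : Fin n → ℝ, (∀ i, 0 ≤ r i) → Real.sqrt (∑ i, r i ^ 2) ≤ 1 / 3 →
      Summable (fun α : List (Fin n) => ‖a α‖ * wordProd r α) ∧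
      ∑' α : List (Fin n), ‖a α‖ * wordProd r α ≤ 1) := by
  have ha_ofReal : a [] = ((a []).re : ℂ) := Complex.ext rfl ha_im
  have ha_norm : ‖a []‖ = (a []).re := by
    rw [ha_ofReal, Complex.norm_of_nonneg ha_nonneg, Complex.ofReal_re]
  have hcoeff (k : ℕ) (hk : 1 ≤ k) : coeffNorm a k ≤ 2 * (1 - (a []).re) := by
    refine le_of_forall_pow_mul_le (k := k) fun r hr hr1 => ?_
    have hpart : (fun k : ℕ => ∑ w : Fin k → Fin n,
        ((r : ℂ) ^ k * a (List.ofFn w)) • wordProd S (List.ofFn w)) =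
        homogPart (fun α => (r : ℂ) ^ α.length * a α) S := by
      ext1 k
      simp [homogPart]
    have hsum := (hopsum r hr hr1).hasSum
    rw [hpart] at hsum
    simpa [coeffNorm_dilation hr] using
      coeffNorm_le_two_mul_one_sub_re hS hsum (by simpa only [hpart] using hre r hr hr1) hk
  have hcoeff_norm (k : ℕ) (hk : 1 ≤ k) : coeffNorm a k ≤ 2 * (1 - ‖a []‖) :=
    ha_norm ▸ hcoeff k hk
  exact ⟨hcoeff, fun K _ _ _ T hT => summable_norm_homogPart_and_tsum_le_one hcoeff_norm T hT,
    fun r hr hr_norm => summable_norm_mul_wordProd_and_tsum_le_one hcoeff_norm hr hr_norm⟩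
end

section
/- (Bohr's inequality) Let f(z) = ∑_{k=0}^∞ a_k z^k be an analytic function on 𝔻 that is bounded, i.e., ‖f‖_∞ := sup_{z ∈ 𝔻} |f(z)| < ∞. Then ∑_{k=0}^∞ |a_k| r^k ≤ ‖f‖_∞ for every r with 0 ≤ r ≤ 1/3. -/
open scoped BigOperators

/-!
The heart of the matter is the coefficient estimate `‖a k‖ ≤ 2 * (C - ‖a 0‖)` for `k ≠ 0`, which
compares all higher coefficients with the same defect `C - ‖a 0‖`. To obtain it, integrate `f` over
a circle `|z| = ρ < 1` against the nonnegative weight `1 + Re (ν e^{-ikt})` of mean one, where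
`|ν| = 1`. Since `f` has no negative frequencies, the result is `a 0 + ν * a k * ρ ^ k / 2`, so this
number has modulus at most `C`; choose `ν` to align the two terms and let `ρ → 1`. At `r ≤ 1 / 3`
the factor `2` is absorbed by the geometric series `r + r ^ 2 + ⋯ = r / (1 - r) ≤ 1 / 2`.
-/

open MeasureTheory AddCircle
open scoped ComplexConjugate

section FourierCoeff

variable {T : ℝ} [Fact (0 < T)]

lemma fourierCoeff_eq_of_hasSum {c : ℤ → ℂ} {g : C(AddCircle T, ℂ)}
    (hg : HasSum (fun n ↦ c n • fourier n) g) : fourierCoeff g = c := by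
  ext m
  let coeff : C(AddCircle T, ℂ) →L[ℂ] ℂ :=
    innerSL ℂ (fourierLp 2 m) ∘L ContinuousMap.toLp 2 haarAddCircle ℂ
  have coeff_apply (h : C(AddCircle T, ℂ)) : coeff h = fourierCoeff h m := by
    rw [← fourierCoeff_toLp, ← fourierBasis_repr, HilbertBasis.repr_apply_apply, coe_fourierBasis]
    rfl
  have hterm (n : ℤ) : coeff (c n • fourier n) = (Pi.single m (c m) : ℤ → ℂ) n := by
    rw [map_smul, coeff_apply, fourierCoeff_fourier]
    obtain rfl | hn := eq_or_ne n m
    · simp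
    · simp [hn, hn.symm]
  have hsum : HasSum (Pi.single m (c m) : ℤ → ℂ) (fourierCoeff g m) := by
    simpa only [hterm, coeff_apply] using coeff.hasSum hg
  exact hsum.unique (hasSum_pi_single m (c m))

lemma fourierCoeff_eq_extend_of_hasSum {ι : Type*} {φ : ι → ℤ} (hφ : Function.Injective φ)
    {c : ι → ℂ} {g : C(AddCircle T, ℂ)} (hg : HasSum (fun i ↦ c i • fourier (φ i)) g) :
    fourierCoeff g = Function.extend φ c 0 := by
  refine fourierCoeff_eq_of_hasSum ((hφ.hasSum_iff fun n hn ↦ ?_).1 ?_)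
  · rw [Function.extend_apply' _ _ _ hn, Pi.zero_apply, zero_smul]
  · simpa only [Function.comp_def, hφ.extend_apply] using hg

lemma integral_fourier_of_ne_zero {n : ℤ} (hn : n ≠ 0) :
    ∫ t : AddCircle T, fourier n t ∂haarAddCircle = 0 := by
  simpa [fourierCoeff, hn.symm] using congrFun (fourierCoeff_fourier (T := T) n) 0

lemma integral_one_add_re_mul_fourier {n : ℤ} (hn : n ≠ 0) (ν : ℂ) :
    ∫ t : AddCircle T, (1 + (ν * fourier n t).re) ∂haarAddCircle = 1 := by
  have h_int : Integrable (fun t : AddCircle T ↦ ν * fourier n t) haarAddCircle :=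
    Continuous.integrable_of_hasCompactSupport (by fun_prop) (.of_compactSpace _)
  calc ∫ t : AddCircle T, (1 + (ν * fourier n t).re) ∂haarAddCircle
      = 1 + (∫ t : AddCircle T, ν * fourier n t ∂haarAddCircle).re := by
        rw [integral_add (g := fun t ↦ (ν * fourier n t).re) (integrable_const 1) h_int.re]
        congr 1
        · simp
        · exact integral_re h_int
    _ = 1 := by
        rw [integral_const_mul, integral_fourier_of_ne_zero hn, mul_zero, Complex.zero_re, add_zero]

variable {E : Type*} [NormedAddCommGroup E] [NormedSpace ℂ E]

lemma integral_one_add_re_mul_fourier_smul {g : AddCircle T → E}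
    (hg : Integrable g haarAddCircle) (k : ℤ) (ν : ℂ) :
    ∫ t, ((1 + (ν * fourier (-k) t).re : ℝ) : ℂ) • g t ∂haarAddCircle =
      fourierCoeff g 0 + (ν / 2) • fourierCoeff g k + (conj ν / 2) • fourierCoeff g (-k) := by
  have hweight (t : AddCircle T) : ((1 + (ν * fourier (-k) t).re : ℝ) : ℂ) • g t =
      fourier (-0) t • g t + (ν / 2) • (fourier (-k) t • g t) +
        (conj ν / 2) • (fourier (-(-k)) t • g t) := by
    have hre : (((ν * fourier (-k) t).re : ℝ) : ℂ) =
        ν / 2 * fourier (-k) t + conj ν / 2 * fourier (-(-k)) t := by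
      rw [fourier_neg (n := -k), Complex.re_eq_add_conj, map_mul]
      ring
    rw [Complex.ofReal_add, Complex.ofReal_one, hre, neg_zero, fourier_zero]
    module
  have h_int (n : ℤ) := hg.fourier_smul n
  simp only [hweight, fourierCoeff]
  rw [integral_add ((h_int _).fun_add ((h_int _).fun_smul _)) ((h_int _).fun_smul _),
    integral_add (h_int _) ((h_int _).fun_smul _), integral_smul, integral_smul]

lemma norm_fourierCoeff_zero_add_le {g : AddCircle T → E} (hg : Integrable g haarAddCircle)
    {C : ℝ} (hC : ∀ t, ‖g t‖ ≤ C) {k : ℤ} (hk : k ≠ 0) {ν : ℂ} (hν : ‖ν‖ ≤ 1) :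
    ‖fourierCoeff g 0 + (ν / 2) • fourierCoeff g k + (conj ν / 2) • fourierCoeff g (-k)‖ ≤ C := by
  let w (t : AddCircle T) : ℝ := 1 + (ν * fourier (-k) t).re
  have hw_nonneg (t) : 0 ≤ w t := by
    have hnorm : ‖ν * fourier (-k) t‖ ≤ 1 := by
      rwa [norm_mul, fourier_apply, Circle.norm_coe, mul_one]
    linarith [neg_le_of_abs_le ((Complex.abs_re_le_norm _).trans hnorm)]
  have hw_int : Integrable w haarAddCircle :=
    Continuous.integrable_of_hasCompactSupport (by fun_prop) (.of_compactSpace _)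
  rw [← integral_one_add_re_mul_fourier_smul hg]
  calc ‖∫ t, (w t : ℂ) • g t ∂haarAddCircle‖
      ≤ ∫ t, w t * C ∂haarAddCircle := by
        refine norm_integral_le_of_norm_le (hw_int.mul_const C) (.of_forall fun t ↦ ?_)
        rw [norm_smul, Complex.norm_of_nonneg (hw_nonneg t)]
        exact mul_le_mul_of_nonneg_left (hC t) (hw_nonneg t)
    _ = C := by
        rw [integral_mul_const, integral_one_add_re_mul_fourier (neg_ne_zero.2 hk), one_mul]

end FourierCoeff

section CoefficientBound

lemma exists_norm_eq_one_and_norm_add_mul_eq {𝕜 : Type*} [RCLike 𝕜] (x y : 𝕜) :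
    ∃ ν : 𝕜, ‖ν‖ = 1 ∧ ‖x + ν * y‖ = ‖x‖ + ‖y‖ := by
  obtain ⟨c, hc, hcx⟩ := RCLike.exists_norm_mul_eq_self x
  obtain ⟨d, hd, hdy⟩ := RCLike.exists_norm_eq_mul_self y
  refine ⟨c * d, by simp [hc, hd], ?_⟩
  calc ‖x + c * d * y‖ = ‖c * ((‖x‖ + ‖y‖ : ℝ) : 𝕜)‖ := by
        congr 1
        push_cast
        linear_combination c * -hdy - hcx
    _ = ‖x‖ + ‖y‖ := by
        rw [norm_mul, hc, one_mul, RCLike.norm_of_nonneg (by positivity)]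

lemma norm_coeff_le_of_norm_tsum_le {b : ℕ → ℂ} (hb : Summable (‖b ·‖)) {C : ℝ}
    (hC : ∀ z : ℂ, ‖z‖ = 1 → ‖∑' n, b n * z ^ n‖ ≤ C) {k : ℕ} (hk : k ≠ 0) :
    ‖b k‖ ≤ 2 * (C - ‖b 0‖) := by
  obtain ⟨g, hg⟩ : Summable fun n : ℕ ↦ b n • (fourier n : C(UnitAddCircle, ℂ)) :=
    .of_norm (by simpa only [norm_smul, fourier_norm, mul_one] using hb)
  have hg_norm (t : UnitAddCircle) : ‖g t‖ ≤ C := by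
    have hgt : HasSum (fun n : ℕ ↦ b n * fourier 1 t ^ n) (g t) := by
      simpa [toCircle_nsmul] using ContinuousMap.hasSum_apply hg t
    exact hgt.tsum_eq ▸ hC (fourier 1 t) (Circle.norm_coe _)
  have hcoeff := fourierCoeff_eq_extend_of_hasSum Nat.cast_injective hg
  have hcoeff_nat (n : ℕ) : fourierCoeff g n = b n := by
    rw [hcoeff, Nat.cast_injective.extend_apply]
  have hcoeff_neg : fourierCoeff g (-k) = 0 := by
    rw [hcoeff, Function.extend_apply' _ _ _ (by rintro ⟨n, hn⟩; omega), Pi.zero_apply]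
  obtain ⟨ν, hν, hadd⟩ := exists_norm_eq_one_and_norm_add_mul_eq (b 0) (b k / 2)
  have hbound := norm_fourierCoeff_zero_add_le
    (g.continuous.integrable_of_hasCompactSupport (.of_compactSpace _)) hg_norm
    (Nat.cast_ne_zero.2 hk) hν.le
  rw [hcoeff_neg, hcoeff_nat k, ← Nat.cast_zero, hcoeff_nat 0, smul_zero, add_zero, smul_eq_mul,
    div_mul_eq_mul_div, mul_div_assoc, hadd, norm_div, Complex.norm_two] at hbound
  linarith

lemma norm_coeff_le_of_norm_le_on_ball {a : ℕ → ℂ} {f : ℂ → ℂ}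
    (hf : ∀ z ∈ Metric.ball (0 : ℂ) 1, HasSum (fun k ↦ a k * z ^ k) (f z))
    {C : ℝ} (hC : ∀ z ∈ Metric.ball (0 : ℂ) 1, ‖f z‖ ≤ C) {k : ℕ} (hk : k ≠ 0) :
    ‖a k‖ ≤ 2 * (C - ‖a 0‖) := by
  have hcircle (ρ : ℝ) (hρ : ρ ∈ Set.Ico 0 1) : ‖a k * ρ ^ k‖ ≤ 2 * (C - ‖a 0‖) := by
    have hmem {z : ℂ} (hz : ‖z‖ = 1) : ρ * z ∈ Metric.ball (0 : ℂ) 1 := by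
      simpa [hz, abs_of_nonneg hρ.1] using hρ.2
    have hsummable : Summable fun n ↦ ‖a n * (ρ : ℂ) ^ n‖ := by
      simpa using (hf _ (hmem norm_one)).summable.norm
    simpa using norm_coeff_le_of_norm_tsum_le hsummable (fun z hz ↦ by
      simpa only [mul_assoc, ← mul_pow, (hf _ (hmem hz)).tsum_eq] using hC _ (hmem hz)) hk
  have hone : (1 : ℝ) ∈ closure (Set.Ico 0 1) := by simp [closure_Ico]
  simpa using le_on_closure (f := fun ρ : ℝ ↦ ‖a k * (ρ : ℂ) ^ k‖) hcircle
    (by fun_prop) (by fun_prop) hone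

end CoefficientBound

section GeometricMajorant

variable {E : Type*} [SeminormedAddCommGroup E] {a : ℕ → E} {D r : ℝ}

lemma summable_norm_mul_pow_of_norm_succ_le (hD : ∀ n, ‖a (n + 1)‖ ≤ D) (hr₀ : 0 ≤ r)
    (hr₁ : r < 1) : Summable fun n ↦ ‖a n‖ * r ^ n := by
  refine (summable_nat_add_iff 1).1 (.of_nonneg_of_le (fun n ↦ by positivity) (fun n ↦ ?_)
    (((summable_nat_add_iff 1).2 (summable_geometric_of_lt_one hr₀ hr₁)).mul_left D))
  exact mul_le_mul_of_nonneg_right (hD n) (by positivity)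

lemma tsum_norm_mul_pow_le_of_norm_succ_le (hD : ∀ n, ‖a (n + 1)‖ ≤ D) (hr₀ : 0 ≤ r)
    (hr₁ : r < 1) : ∑' n, ‖a n‖ * r ^ n ≤ ‖a 0‖ + D * (r / (1 - r)) := by
  have hsummable := summable_norm_mul_pow_of_norm_succ_le hD hr₀ hr₁
  have hgeom : HasSum (fun n ↦ D * r ^ (n + 1)) (D * (r / (1 - r))) := by
    simpa only [pow_succ', div_eq_mul_inv] using
      ((hasSum_geometric_of_lt_one hr₀ hr₁).mul_left r).mul_left D
  rw [hsummable.tsum_eq_zero_add, pow_zero, mul_one, ← hgeom.tsum_eq]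
  gcongr with n
  · exact (summable_nat_add_iff 1).2 hsummable
  · exact hgeom.summable
  · exact hD n

end GeometricMajorant

theorem stmt_13 (a : ℕ → ℂ) (f : ℂ → ℂ)
    (hf : ∀ z ∈ Metric.ball (0 : ℂ) 1, HasSum (fun k : ℕ => a k * z ^ k) (f z))
    (C : ℝ) (hC : ∀ z ∈ Metric.ball (0 : ℂ) 1, ‖f z‖ ≤ C) :
    ∀ r : ℝ, 0 ≤ r → r ≤ 1 / 3 →
      Summable (fun k : ℕ => ‖a k‖ * r ^ k) ∧
      ∑' k : ℕ, ‖a k‖ * r ^ k ≤ C := by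
  intro r hr₀ hr
  have hr₁ : r < 1 := by linarith
  have hcoeff (n : ℕ) : ‖a (n + 1)‖ ≤ 2 * (C - ‖a 0‖) :=
    norm_coeff_le_of_norm_le_on_ball hf hC n.succ_ne_zero
  have hdefect : 0 ≤ 2 * (C - ‖a 0‖) := (norm_nonneg _).trans (hcoeff 0)
  have hratio : r / (1 - r) ≤ 1 / 2 := by
    rw [div_le_iff₀ (by linarith)]
    linarith
  refine ⟨summable_norm_mul_pow_of_norm_succ_le hcoeff hr₀ hr₁, ?_⟩
  calc ∑' k, ‖a k‖ * r ^ k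
      ≤ ‖a 0‖ + 2 * (C - ‖a 0‖) * (r / (1 - r)) :=
        tsum_norm_mul_pow_le_of_norm_succ_le hcoeff hr₀ hr₁
    _ ≤ ‖a 0‖ + 2 * (C - ‖a 0‖) * (1 / 2) := by gcongr
    _ = C := by ring
end

section
/- Let T be a bounded operator on ℓ²(𝔽ₙ⁺) that commutes with each right creation operator R₁,…,Rₙ (i.e., T belongs to the noncommutative analytic Toeplitz algebra Fₙ^∞), and define its coefficients a_α := ⟨T e_{g₀}, e_α⟩ for α ∈ 𝔽ₙ⁺. Then for every complex Hilbert space 𝒦 and every (T₁,…,Tₙ) ∈ [B(𝒦)ⁿ]_{1/3}, one has ∑_{k=0}^∞ ‖∑_{|α|=k} |a_α| T_α‖ ≤ ‖T‖; in particular, ∑_{α ∈ 𝔽ₙ⁺} |a_α| r_α ≤ ‖T‖ for every tuple r of nonnegative reals with ‖r‖₂ ≤ 1/3. -/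
open scoped BigOperators

/-!
The vacuum vector `e` and the unit vector `u` along the degree `k ≥ 1` part of `T e` compress `T`
to the matrix `[[a₀, 0], [s, a₀]]`, where `a₀` is the constant coefficient and `s` is the `ℓ²`-norm
of the coefficients of degree `k`: since `T` commutes with right creation, `T e_α = R_α (T e)`
contains only words of length at least `|α|`, and `α` is the only one of length `|α|`, with
coefficient `a₀`. The numerical radius of this matrix is `|a₀| + s / 2`, so `s ≤ 2 (‖T‖ - |a₀|)`.

For a row operator of norm at most `1/3` the degree `k` term of the series is at most `s / 3 ^ k`,
by the Cauchy-Schwarz inequality, and `∑_{k ≥ 1} 3⁻ᵏ = 1/2` gives the total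
`|a₀| + (‖T‖ - |a₀|) = ‖T‖`.
-/

section Compression

variable {𝕜 H : Type*} [RCLike 𝕜] [NormedAddCommGroup H] [InnerProductSpace 𝕜 H]

-- Rotating `u` so that the two summands of `⟪e + c u, T (e + c u)⟫ = 2 z + conj c ⟪u, T e⟫` align.
theorem norm_add_half_norm_inner_le_opNorm (T : H →L[𝕜] H) {e u : H} {z : 𝕜}
    (he : ‖e‖ = 1) (hu : ‖u‖ = 1) (heu : inner 𝕜 e u = 0) (hTe : inner 𝕜 e (T e) = z)
    (hTu : inner 𝕜 u (T u) = z) (heTu : inner 𝕜 e (T u) = 0) :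
    ‖z‖ + ‖inner 𝕜 u (T e)‖ / 2 ≤ ‖T‖ := by
  obtain ⟨ζ, hζ, hζz⟩ := RCLike.exists_norm_eq_mul_self z
  obtain ⟨η, hη, hηw⟩ := RCLike.exists_norm_eq_mul_self (inner 𝕜 u (T e))
  set c : 𝕜 := ζ * starRingEnd 𝕜 η with hc
  have hc_norm : ‖c‖ = 1 := by rw [hc, norm_mul, RCLike.norm_conj, hζ, hη, one_mul]
  have hζ_conj : ζ * starRingEnd 𝕜 ζ = 1 := by rw [RCLike.mul_conj, hζ]; simp
  have hc_conj : starRingEnd 𝕜 c * c = 1 := by rw [RCLike.conj_mul, hc_norm]; simp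
  have hx : ‖e + c • u‖ ^ 2 = 2 := by
    have h := norm_add_sq_eq_norm_sq_add_norm_sq_of_inner_eq_zero e (c • u)
      (by rw [inner_smul_right, heu, mul_zero])
    rw [norm_smul, he, hu, hc_norm] at h
    linarith
  have hxTx : inner 𝕜 (e + c • u) (T (e + c • u)) =
      2 * z + starRingEnd 𝕜 c * inner 𝕜 u (T e) := by
    simp only [map_add, map_smul, inner_add_left, inner_add_right, inner_smul_left,
      inner_smul_right, hTe, hTu, heTu]
    linear_combination z * hc_conj
  have haligned : ζ * inner 𝕜 (e + c • u) (T (e + c • u)) =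
      ((2 * ‖z‖ + ‖inner 𝕜 u (T e)‖ : ℝ) : 𝕜) := by
    rw [hxTx, hc, map_mul, RCLike.conj_conj, RCLike.ofReal_add, RCLike.ofReal_mul, hζz, hηw,
      RCLike.ofReal_ofNat]
    linear_combination η * inner 𝕜 u (T e) * hζ_conj
  have hbound : 2 * ‖z‖ + ‖inner 𝕜 u (T e)‖ ≤ ‖T‖ * 2 := calc
    2 * ‖z‖ + ‖inner 𝕜 u (T e)‖ = ‖inner 𝕜 (e + c • u) (T (e + c • u))‖ := by
      rw [← one_mul ‖inner 𝕜 (e + c • u) _‖, ← hζ, ← norm_mul, haligned,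
        RCLike.norm_of_nonneg (by positivity)]
    _ ≤ ‖e + c • u‖ * (‖T‖ * ‖e + c • u‖) :=
      (norm_inner_le_norm _ _).trans (by gcongr; exact T.le_opNorm _)
    _ = ‖T‖ * 2 := by rw [← hx]; ring
  linarith

theorem norm_add_norm_inner_div_le_opNorm (T : H →L[𝕜] H) {e u : H} {z : 𝕜}
    (he : ‖e‖ = 1) (heu : inner 𝕜 e u = 0) (hTe : inner 𝕜 e (T e) = z)
    (hTu : inner 𝕜 u (T u) = z * inner 𝕜 u u) (heTu : inner 𝕜 e (T u) = 0) :
    ‖z‖ + ‖inner 𝕜 u (T e)‖ / ‖u‖ / 2 ≤ ‖T‖ := by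
  rcases eq_or_ne u 0 with rfl | hu
  · calc ‖z‖ + ‖inner 𝕜 0 (T e)‖ / ‖(0 : H)‖ / 2 = ‖inner 𝕜 e (T e)‖ := by simp [hTe]
      _ ≤ ‖e‖ * (‖T‖ * ‖e‖) := (norm_inner_le_norm _ _).trans (by gcongr; exact T.le_opNorm _)
      _ = ‖T‖ := by rw [he]; ring
  have hu_norm : (‖u‖ : 𝕜) ≠ 0 := RCLike.ofReal_ne_zero.2 (norm_ne_zero_iff.2 hu)
  have h := norm_add_half_norm_inner_le_opNorm T (u := (‖u‖⁻¹ : 𝕜) • u) he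
    (norm_smul_inv_norm hu) (by rw [inner_smul_right, heu, mul_zero]) hTe
    (by
      rw [map_smul, inner_smul_left, inner_smul_right, hTu, inner_self_eq_norm_sq_to_K, map_inv₀,
        RCLike.conj_ofReal]
      field_simp)
    (by rw [map_smul, inner_smul_right, heTu, mul_zero])
  rwa [inner_smul_left, norm_mul, RCLike.norm_conj, norm_inv, RCLike.norm_ofReal, abs_norm,
    inv_mul_eq_div] at h

theorem norm_add_half_sqrt_sum_sq_le_opNorm {κ : Type*} [Fintype κ] [DecidableEq κ]
    (T : H →L[𝕜] H) {e : H} {v : κ → H} {z : 𝕜} (he : ‖e‖ = 1) (hv : Orthonormal 𝕜 v)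
    (hev : ∀ i, inner 𝕜 e (v i) = 0) (hTe : inner 𝕜 e (T e) = z)
    (hTv : ∀ i j, inner 𝕜 (v i) (T (v j)) = if i = j then z else 0)
    (heTv : ∀ i, inner 𝕜 e (T (v i)) = 0) :
    ‖z‖ + √(∑ i, ‖inner 𝕜 (v i) (T e)‖ ^ 2) / 2 ≤ ‖T‖ := by
  set u : H := ∑ i, inner 𝕜 (v i) (T e) • v i with hu
  have huTe : inner 𝕜 u (T e) = ∑ i, (‖inner 𝕜 (v i) (T e)‖ : 𝕜) ^ 2 := by
    simp only [hu, sum_inner, inner_smul_left, RCLike.conj_mul]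
  have huu : inner 𝕜 u u = inner 𝕜 u (T e) := by
    rw [huTe, hu, hv.inner_sum]
    simp only [RCLike.conj_mul]
  have hu_norm : ‖inner 𝕜 u (T e)‖ = ‖u‖ ^ 2 := by
    rw [← huu, inner_self_eq_norm_sq_to_K, norm_pow, RCLike.norm_ofReal, abs_norm]
  have hs : √(∑ i, ‖inner 𝕜 (v i) (T e)‖ ^ 2) = ‖u‖ := by
    rw [Real.sqrt_eq_iff_eq_sq (by positivity) (norm_nonneg u), ← hu_norm, huTe]
    norm_cast
    exact (abs_of_nonneg (by positivity)).symm
  have hvTu : ∀ i, inner 𝕜 (v i) (T u) = z * inner 𝕜 (v i) u := fun i => by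
    rw [hu, hv.inner_right_fintype]
    simp [inner_sum, inner_smul_right, hTv, mul_comm]
  have h := norm_add_norm_inner_div_le_opNorm T (u := u) he
    (by simp [hu, inner_sum, inner_smul_right, hev]) hTe
    (by
      nth_rewrite 1 3 [hu]
      simp only [sum_inner, inner_smul_left, hvTu, Finset.mul_sum]
      exact Finset.sum_congr rfl fun i _ => mul_left_comm _ _ _)
    (by simp [hu, inner_sum, inner_smul_right, heTv])
  rwa [hu_norm, sq, mul_self_div_self, ← hs] at h

end Compression

theorem continuousLinearMap_ext_hilbertBasis {κ 𝕜 H F : Type*} [RCLike 𝕜] [NormedAddCommGroup H]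
    [InnerProductSpace 𝕜 H] [NormedAddCommGroup F] [NormedSpace 𝕜 F] (b : HilbertBasis κ 𝕜 H)
    {S S' : H →L[𝕜] F} (h : ∀ i, S (b i) = S' (b i)) : S = S' :=
  ContinuousLinearMap.ext_on (Submodule.dense_iff_topologicalClosure_eq_top.2 b.dense_span)
    (Set.forall_mem_range.2 h)

section CreationOperators

variable {𝕜 H ι : Type*} [RCLike 𝕜] [NormedAddCommGroup H] [InnerProductSpace 𝕜 H]
  {b : HilbertBasis (List ι) 𝕜 H} {R : ι → H →L[𝕜] H} {T : H →L[𝕜] H}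

theorem inner_nil_rightCreation (hR : ∀ i α, R i (b α) = b (α ++ [i])) (i : ι) (x : H) :
    inner 𝕜 (b []) (R i x) = 0 := by
  have h : innerSL 𝕜 (b []) ∘L R i = 0 := continuousLinearMap_ext_hilbertBasis b fun α => by
    simp [hR, b.orthonormal.inner_eq_zero]
  exact DFunLike.congr_fun h x

theorem inner_append_singleton_rightCreation [DecidableEq ι]
    (hR : ∀ i α, R i (b α) = b (α ++ [i])) (i j : ι) (β : List ι) (x : H) :
    inner 𝕜 (b (β ++ [j])) (R i x) = if j = i then inner 𝕜 (b β) x else 0 := by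
  have h : innerSL 𝕜 (b (β ++ [j])) ∘L R i = if j = i then innerSL 𝕜 (b β) else 0 :=
    continuousLinearMap_ext_hilbertBasis b fun α => by
      split_ifs with hji <;>
        simp [hR, orthonormal_iff_ite.1 b.orthonormal, hji]
  split_ifs at h ⊢ <;> exact DFunLike.congr_fun h x

-- Peel common last letters off `α` and `β`, moving them through `T` as right creation operators.
theorem inner_map_of_length_le [DecidableEq ι] (hR : ∀ i α, R i (b α) = b (α ++ [i]))
    (hT : ∀ i, T * R i = R i * T) {α β : List ι} (h : β.length ≤ α.length) :
    inner 𝕜 (b β) (T (b α)) = if β = α then inner 𝕜 (b []) (T (b [])) else 0 := by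
  induction α using List.reverseRecOn generalizing β with
  | nil =>
    obtain rfl : β = [] := by simpa using h
    simp
  | append_singleton α i ih =>
    have hTR : T (b (α ++ [i])) = R i (T (b α)) := by
      rw [← hR]; exact DFunLike.congr_fun (hT i) (b α)
    rw [hTR]
    rcases β.eq_nil_or_concat' with rfl | ⟨β, j, rfl⟩
    · simp [inner_nil_rightCreation hR]
    · rw [inner_append_singleton_rightCreation hR, ih (by simpa using h)]
      by_cases hj : j = i <;> simp [hj]

/-- The `ℓ²`-norm of the degree `k` coefficients of the noncommutative power series `∑ a_α X_α`,
words of length `k` being encoded as functions `Fin k → ι`. -/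
noncomputable def homogeneousNorm [Fintype ι] (a : List ι → 𝕜) (k : ℕ) : ℝ :=
  √(∑ w : Fin k → ι, ‖a (List.ofFn w)‖ ^ 2)

theorem norm_coeff_nil_add_half_homogeneousNorm_le_opNorm [Fintype ι]
    (hR : ∀ i α, R i (b α) = b (α ++ [i])) (hT : ∀ i, T * R i = R i * T) {k : ℕ} (hk : k ≠ 0) :
    ‖inner 𝕜 (b []) (T (b []))‖ + homogeneousNorm (fun α => inner 𝕜 (b α) (T (b []))) k / 2 ≤
      ‖T‖ := by
  classical
  have hnil (w : Fin k → ι) : [] ≠ List.ofFn w := fun h =>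
    hk (List.ofFn_eq_nil_iff.1 h.symm)
  refine norm_add_half_sqrt_sum_sq_le_opNorm T (b.orthonormal.norm_eq_one [])
    (b.orthonormal.comp _ List.ofFn_injective) (fun w => b.orthonormal.inner_eq_zero (hnil w)) rfl
    (fun w w' => ?_) fun w => ?_
  · rw [inner_map_of_length_le hR hT (by simp)]
    simp only [List.ofFn_injective.eq_iff]
  · rw [inner_map_of_length_le hR hT (by simp), if_neg (hnil w)]

end CreationOperators

theorem summable_and_tsum_le_of_le_geometric {f : ℕ → ℝ} {x M : ℝ} (hf : ∀ k, 0 ≤ f k)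
    (h_zero : f 0 ≤ x) (h_succ : ∀ k, f (k + 1) ≤ (1 / 3) ^ (k + 1) * (2 * (M - x))) :
    Summable f ∧ ∑' k, f k ≤ M := by
  have hgeom : HasSum (fun k : ℕ => (1 / 3 : ℝ) ^ (k + 1) * (2 * (M - x))) (M - x) := by
    have h := (hasSum_geometric_of_lt_one (r := (1 / 3 : ℝ)) (by norm_num) (by norm_num)).mul_left
      (2 * (M - x) / 3)
    rw [show M - x = 2 * (M - x) / 3 * (1 - 1 / 3)⁻¹ by norm_num; ring]
    exact h.congr_fun fun k => by ring
  have htail : Summable fun k => f (k + 1) :=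
    hgeom.summable.of_nonneg_of_le (fun k => hf (k + 1)) h_succ
  have hsum : Summable f := (summable_nat_add_iff 1).1 htail
  refine ⟨hsum, ?_⟩
  rw [hsum.tsum_eq_zero_add]
  linarith [hasSum_le h_succ htail.hasSum hgeom]

theorem sum_univ_pi_fin_succ {ι M : Type*} [Fintype ι] [AddCommMonoid M] {k : ℕ}
    (g : (Fin (k + 1) → ι) → M) : ∑ w, g w = ∑ i, ∑ w : Fin k → ι, g (Fin.cons i w) := by
  rw [← (Fin.consEquiv fun _ => ι).sum_comp, Fintype.sum_prod_type]
  rfl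

section RowOperators

variable {𝕜 E F ι : Type*} [RCLike 𝕜] [NormedAddCommGroup E] [InnerProductSpace 𝕜 E]
  [CompleteSpace E] [NormedAddCommGroup F] [InnerProductSpace 𝕜 F] [CompleteSpace F] [Fintype ι]

/-- The norm of the row operator `[T₁ ⋯ Tₙ]`, expressed as `‖T₁T₁* + ⋯ + TₙTₙ*‖^{1/2}`. -/
noncomputable def rowNorm (T : ι → E →L[𝕜] F) : ℝ :=
  √‖∑ i, T i ∘L ContinuousLinearMap.adjoint (T i)‖

theorem sqrt_sum_norm_adjoint_sq_le (T : ι → E →L[𝕜] F) (z : F) :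
    √(∑ i, ‖ContinuousLinearMap.adjoint (T i) z‖ ^ 2) ≤ rowNorm T * ‖z‖ := by
  set P := ∑ i, T i ∘L ContinuousLinearMap.adjoint (T i) with hP
  have hsum : ∑ i, ‖ContinuousLinearMap.adjoint (T i) z‖ ^ 2 = RCLike.re (inner 𝕜 (P z) z) := by
    simp [hP, sum_inner, ContinuousLinearMap.apply_norm_sq_eq_inner_adjoint_left]
  have hle : RCLike.re (inner 𝕜 (P z) z) ≤ ‖P‖ * ‖z‖ ^ 2 := calc
    RCLike.re (inner 𝕜 (P z) z) ≤ ‖P z‖ * ‖z‖ := re_inner_le_norm _ _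
    _ ≤ ‖P‖ * ‖z‖ * ‖z‖ := by gcongr; exact P.le_opNorm z
    _ = ‖P‖ * ‖z‖ ^ 2 := by ring
  calc √(∑ i, ‖ContinuousLinearMap.adjoint (T i) z‖ ^ 2) ≤ √(‖P‖ * ‖z‖ ^ 2) :=
        Real.sqrt_le_sqrt (hsum.trans_le hle)
    _ = rowNorm T * ‖z‖ := by rw [Real.sqrt_mul (norm_nonneg P), Real.sqrt_sq (norm_nonneg z)]; rfl

theorem norm_sum_apply_le_rowNorm_mul (T : ι → E →L[𝕜] F) (y : ι → E) :
    ‖∑ i, T i (y i)‖ ≤ rowNorm T * √(∑ i, ‖y i‖ ^ 2) := by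
  set z := ∑ i, T i (y i) with hz
  have hzz : ‖z‖ * ‖z‖ ≤ ‖z‖ * (rowNorm T * √(∑ i, ‖y i‖ ^ 2)) := calc
    ‖z‖ * ‖z‖ = ‖inner 𝕜 z z‖ := by
      rw [inner_self_eq_norm_sq_to_K, norm_pow, RCLike.norm_ofReal, abs_norm, sq]
    _ = ‖∑ i, inner 𝕜 (ContinuousLinearMap.adjoint (T i) z) (y i)‖ := by
      simp only [ContinuousLinearMap.adjoint_inner_left, ← inner_sum, ← hz]
    _ ≤ ∑ i, ‖ContinuousLinearMap.adjoint (T i) z‖ * ‖y i‖ :=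
      norm_sum_le_of_le _ fun i _ => norm_inner_le_norm _ _
    _ ≤ √(∑ i, ‖ContinuousLinearMap.adjoint (T i) z‖ ^ 2) * √(∑ i, ‖y i‖ ^ 2) :=
      Real.sum_mul_le_sqrt_mul_sqrt _ _ _
    _ ≤ rowNorm T * ‖z‖ * √(∑ i, ‖y i‖ ^ 2) := by
      gcongr; exact sqrt_sum_norm_adjoint_sq_le T z
    _ = ‖z‖ * (rowNorm T * √(∑ i, ‖y i‖ ^ 2)) := by ring
  rcases (norm_nonneg z).eq_or_lt with hz0 | hz0
  · rw [← hz0]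
    exact mul_nonneg (Real.sqrt_nonneg _) (Real.sqrt_nonneg _)
  · exact le_of_mul_le_mul_left hzz hz0

theorem norm_sum_word_apply_le (T : ι → E →L[𝕜] E) (k : ℕ) (y : (Fin k → ι) → E) :
    ‖∑ w, ((List.ofFn w).map T).prod (y w)‖ ≤ rowNorm T ^ k * √(∑ w, ‖y w‖ ^ 2) := by
  induction k with
  | zero => simp [Real.sqrt_sq]
  | succ k ih =>
    calc ‖∑ w, ((List.ofFn w).map T).prod (y w)‖
        = ‖∑ i, T i (∑ w, ((List.ofFn w).map T).prod (y (Fin.cons i w)))‖ := by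
          simp [sum_univ_pi_fin_succ]
      _ ≤ rowNorm T *
          √(∑ i, ‖∑ w, ((List.ofFn w).map T).prod (y (Fin.cons i w))‖ ^ 2) :=
        norm_sum_apply_le_rowNorm_mul T _
      _ ≤ rowNorm T * √(∑ i, (rowNorm T ^ k * √(∑ w, ‖y (Fin.cons i w)‖ ^ 2)) ^ 2) := by
        gcongr
        · exact Real.sqrt_nonneg _
        · exact ih _
      _ = rowNorm T ^ (k + 1) * √(∑ w, ‖y w‖ ^ 2) := by
        have h : 0 ≤ rowNorm T := Real.sqrt_nonneg _
        simp_rw [mul_pow, Real.sq_sqrt (Finset.sum_nonneg fun _ _ => sq_nonneg _), ← Finset.mul_sum]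
        rw [Real.sqrt_mul (by positivity), Real.sqrt_sq (by positivity),
          sum_univ_pi_fin_succ fun w => ‖y w‖ ^ 2]
        ring

theorem norm_sum_smul_word_le (T : ι → E →L[𝕜] E) (k : ℕ) (c : (Fin k → ι) → 𝕜) :
    ‖∑ w, c w • ((List.ofFn w).map T).prod‖ ≤ rowNorm T ^ k * √(∑ w, ‖c w‖ ^ 2) := by
  have h : 0 ≤ rowNorm T := Real.sqrt_nonneg _
  refine ContinuousLinearMap.opNorm_le_bound _ (by positivity) fun v => ?_
  calc ‖(∑ w, c w • ((List.ofFn w).map T).prod) v‖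
      = ‖∑ w, ((List.ofFn w).map T).prod (c w • v)‖ := by simp
    _ ≤ rowNorm T ^ k * √(∑ w, ‖c w • v‖ ^ 2) := norm_sum_word_apply_le T k _
    _ = rowNorm T ^ k * √(∑ w, ‖c w‖ ^ 2) * ‖v‖ := by
      simp_rw [norm_smul, mul_pow, ← Finset.sum_mul]
      rw [Real.sqrt_mul (by positivity), Real.sqrt_sq (norm_nonneg v), mul_assoc]

end RowOperators

theorem sum_mul_word_le {ι : Type*} [Fintype ι] (r : ι → ℝ) (k : ℕ) (c : (Fin k → ι) → ℝ) :
    ∑ w, c w * ((List.ofFn w).map r).prod ≤ √(∑ i, r i ^ 2) ^ k * √(∑ w, c w ^ 2) := by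
  have hsq : ∑ w : Fin k → ι, ((List.ofFn w).map r).prod ^ 2 =
      (√(∑ i, r i ^ 2) ^ k) ^ 2 := by
    rw [pow_right_comm, Real.sq_sqrt (by positivity), Fintype.sum_pow]
    simp [List.map_ofFn, List.prod_ofFn, Finset.prod_pow]
  calc ∑ w, c w * ((List.ofFn w).map r).prod
      ≤ √(∑ w, c w ^ 2) * √(∑ w : Fin k → ι, ((List.ofFn w).map r).prod ^ 2) :=
        Real.sum_mul_le_sqrt_mul_sqrt _ _ _
    _ = √(∑ i, r i ^ 2) ^ k * √(∑ w, c w ^ 2) := by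
      rw [hsq, Real.sqrt_sq (by positivity), mul_comm]

theorem hasSum_list_of_hasSum_length {ι : Type*} [Fintype ι] {f : List ι → ℝ} {s : ℝ}
    (hf : ∀ α, 0 ≤ f α) (hs : HasSum (fun k => ∑ w : Fin k → ι, f (List.ofFn w)) s) :
    HasSum f s := by
  have hsum : Summable (f ∘ List.equivSigmaTuple.symm) :=
    (summable_sigma_of_nonneg fun _ => hf _).2 ⟨fun k => (hasSum_fintype _).summable, by
      simpa only [tsum_fintype] using! hs.summable⟩
  rw [← List.equivSigmaTuple.symm.hasSum_iff]
  exact hs.sigma_of_hasSum (fun k => hasSum_fintype _) hsum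

section BohrInequality

variable {𝕜 H K ι : Type*} [RCLike 𝕜] [NormedAddCommGroup H] [InnerProductSpace 𝕜 H]
  [NormedAddCommGroup K] [InnerProductSpace 𝕜 K] [CompleteSpace K] [Fintype ι]
  {b : HilbertBasis (List ι) 𝕜 H} {R : ι → H →L[𝕜] H} {T : H →L[𝕜] H} {a : List ι → 𝕜}

theorem summable_and_tsum_le_opNorm_of_le_homogeneousNorm (hR : ∀ i α, R i (b α) = b (α ++ [i]))
    (hT : ∀ i, T * R i = R i * T) (ha : ∀ α, a α = inner 𝕜 (b α) (T (b []))) {f : ℕ → ℝ}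
    (hf_nonneg : ∀ k, 0 ≤ f k) (hf_le : ∀ k, f k ≤ (1 / 3) ^ k * homogeneousNorm a k) :
    Summable f ∧ ∑' k, f k ≤ ‖T‖ := by
  have hcoeff (k : ℕ) : ‖a []‖ + homogeneousNorm a (k + 1) / 2 ≤ ‖T‖ := by
    rw [funext ha]
    exact norm_coeff_nil_add_half_homogeneousNorm_le_opNorm hR hT k.succ_ne_zero
  refine summable_and_tsum_le_of_le_geometric (x := ‖a []‖) hf_nonneg ?_ fun k => ?_
  · simpa [homogeneousNorm, Real.sqrt_sq] using hf_le 0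
  · refine (hf_le (k + 1)).trans ?_
    gcongr
    linarith [hcoeff k]

theorem bohr_inequality_of_rowNorm_le (hR : ∀ i α, R i (b α) = b (α ++ [i]))
    (hT : ∀ i, T * R i = R i * T) (ha : ∀ α, a α = inner 𝕜 (b α) (T (b [])))
    {T' : ι → K →L[𝕜] K} (hT' : rowNorm T' ≤ 1 / 3) :
    Summable (fun k : ℕ => ‖∑ w : Fin k → ι,
        (‖a (List.ofFn w)‖ : 𝕜) • ((List.ofFn w).map T').prod‖) ∧
      ∑' k : ℕ, ‖∑ w : Fin k → ι,
        (‖a (List.ofFn w)‖ : 𝕜) • ((List.ofFn w).map T').prod‖ ≤ ‖T‖ := by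
  have h : 0 ≤ rowNorm T' := Real.sqrt_nonneg _
  refine summable_and_tsum_le_opNorm_of_le_homogeneousNorm hR hT ha (fun _ => norm_nonneg _)
    fun k => ?_
  calc ‖∑ w : Fin k → ι, (‖a (List.ofFn w)‖ : 𝕜) • ((List.ofFn w).map T').prod‖
      ≤ rowNorm T' ^ k * √(∑ w : Fin k → ι, ‖(‖a (List.ofFn w)‖ : 𝕜)‖ ^ 2) :=
        norm_sum_smul_word_le T' k _
    _ = rowNorm T' ^ k * homogeneousNorm a k := by simp [homogeneousNorm]
    _ ≤ (1 / 3) ^ k * homogeneousNorm a k := by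
      gcongr
      exact Real.sqrt_nonneg _

theorem bohr_inequality_of_sqrt_sum_sq_le (hR : ∀ i α, R i (b α) = b (α ++ [i]))
    (hT : ∀ i, T * R i = R i * T) (ha : ∀ α, a α = inner 𝕜 (b α) (T (b [])))
    {r : ι → ℝ} (hr_nonneg : ∀ i, 0 ≤ r i) (hr : √(∑ i, r i ^ 2) ≤ 1 / 3) :
    Summable (fun α : List ι => ‖a α‖ * (α.map r).prod) ∧
      ∑' α : List ι, ‖a α‖ * (α.map r).prod ≤ ‖T‖ := by
  have hterm (α : List ι) : 0 ≤ ‖a α‖ * (α.map r).prod :=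
    mul_nonneg (norm_nonneg _) (List.prod_nonneg (List.forall_mem_map.2 fun i _ => hr_nonneg i))
  obtain ⟨hsum, hle⟩ := summable_and_tsum_le_opNorm_of_le_homogeneousNorm hR hT ha
    (f := fun k => ∑ w : Fin k → ι, ‖a (List.ofFn w)‖ * ((List.ofFn w).map r).prod)
    (fun k => Finset.sum_nonneg fun w _ => hterm _) fun k =>
      (sum_mul_word_le r k _).trans (by
        rw [homogeneousNorm]
        gcongr)
  have h := hasSum_list_of_hasSum_length hterm hsum.hasSum
  exact ⟨h.summable, h.tsum_eq.trans_le hle⟩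

theorem stmt_14_general (hR : ∀ i α, R i (b α) = b (α ++ [i])) (hT : ∀ i, T * R i = R i * T)
    (ha : ∀ α, a α = inner 𝕜 (b α) (T (b []))) :
    (∀ (K : Type*) [NormedAddCommGroup K] [InnerProductSpace 𝕜 K] [CompleteSpace K],
      ∀ T' : ι → K →L[𝕜] K, √‖∑ i, T' i * ContinuousLinearMap.adjoint (T' i)‖ ≤ 1 / 3 →
        Summable (fun k : ℕ => ‖∑ w : Fin k → ι,
          (‖a (List.ofFn w)‖ : 𝕜) • ((List.ofFn w).map T').prod‖) ∧
        ∑' k : ℕ, ‖∑ w : Fin k → ι,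
          (‖a (List.ofFn w)‖ : 𝕜) • ((List.ofFn w).map T').prod‖ ≤ ‖T‖) ∧
    (∀ r : ι → ℝ, (∀ i, 0 ≤ r i) → √(∑ i, r i ^ 2) ≤ 1 / 3 →
      Summable (fun α : List ι => ‖a α‖ * (α.map r).prod) ∧
      ∑' α : List ι, ‖a α‖ * (α.map r).prod ≤ ‖T‖) :=
  ⟨fun _ _ _ _ _ hT' => bohr_inequality_of_rowNorm_le hR hT ha hT',
    fun _ hr_nonneg hr => bohr_inequality_of_sqrt_sum_sq_le hR hT ha hr_nonneg hr⟩

end BohrInequality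

/-- The vectors `fockBasis n α` as a Hilbert basis of the Fock space, which is literally `ℓ²`, so
that the coordinate map is the identity. -/
noncomputable def fockHilbertBasis (n : ℕ) : HilbertBasis (List (Fin n)) ℂ (Fock n) :=
  HilbertBasis.ofRepr (LinearIsometryEquiv.refl ℂ (Fock n))

theorem coe_fockHilbertBasis (n : ℕ) : ⇑(fockHilbertBasis n) = fockBasis n :=
  funext fun α => ((fockHilbertBasis n).repr_symm_single α).symm

theorem stmt_14 (n : ℕ) (hn : 1 ≤ n)
    (R : Fin n → Fock n →L[ℂ] Fock n)
    (hR : ∀ (i : Fin n) (α : List (Fin n)), R i (fockBasis n α) = fockBasis n (α ++ [i]))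
    (T : Fock n →L[ℂ] Fock n) (hT : ∀ i : Fin n, T * R i = R i * T)
    (a : List (Fin n) → ℂ)
    (ha : ∀ α : List (Fin n),
      a α = inner (𝕜 := ℂ) (fockBasis n α) (T (fockBasis n []))) :
    (∀ (K : Type) [NormedAddCommGroup K] [InnerProductSpace ℂ K] [CompleteSpace K],
      ∀ T' : Fin n → K →L[ℂ] K,
        Real.sqrt ‖∑ i, T' i * ContinuousLinearMap.adjoint (T' i)‖ ≤ 1 / 3 →
        Summable (fun k : ℕ => ‖∑ w : Fin k → Fin n,
          ((‖a (List.ofFn w)‖ : ℂ)) • wordProd T' (List.ofFn w)‖) ∧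
        ∑' k : ℕ, ‖∑ w : Fin k → Fin n,
          ((‖a (List.ofFn w)‖ : ℂ)) • wordProd T' (List.ofFn w)‖ ≤ ‖T‖) ∧
    (∀ r : Fin n → ℝ, (∀ i, 0 ≤ r i) → Real.sqrt (∑ i, r i ^ 2) ≤ 1 / 3 →
      Summable (fun α : List (Fin n) => ‖a α‖ * wordProd r α) ∧
      ∑' α : List (Fin n), ‖a α‖ * wordProd r α ≤ ‖T‖) := by
  rw [← coe_fockHilbertBasis] at hR ha
  exact stmt_14_general hR hT ha
end
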